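/- In the damped model, if n·L⁺(g₁) + (n−1)·L⁺(g₂) ≤ 1, then the map u has a unique fixed point x* in Σ, x* ∈ int(Σ), and for every x ∈ Σ the iterates u^s(x) converge to x* as s → ∞. -/

import Mathlib

open Set Matrix Filter Topology

/-- A weight function for the damped model: either admissible (continuously
differentiable, `g 0 = 1`, `g' > 0` on `[0,1]`) or the constant function `1`
(with derivative `0`). -/
def IsWeight (g g' : ℝ → ℝ) : Prop :=
  (∀ x ∈ Set.Icc (0:ℝ) 1, HasDerivWithinAt g (g' x) (Set.Icc (0:ℝ) 1) x) ∧
  ContinuousOn g' (Set.Icc (0:ℝ) 1) ∧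
  g 0 = 1 ∧
  (∀ x ∈ Set.Icc (0:ℝ) 1, 0 < g x) ∧
  ((∀ x ∈ Set.Icc (0:ℝ) 1, 0 < g' x) ∨
    ((∀ x ∈ Set.Icc (0:ℝ) 1, g x = 1) ∧ ∀ x ∈ Set.Icc (0:ℝ) 1, g' x = 0))

/-- The set of values `g'(x)/g(x)` for `x ∈ [0,1]`; its maximum is `L⁺(g)`
(equal to `0` for the constant weight `1`). -/
def ratioSet (g g' : ℝ → ℝ) : Set ℝ := (fun x => g' x / g x) '' Set.Icc (0:ℝ) 1

/-- The damped transition matrix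
`M(x)_{ij} = γ·C_{ij} g₁(x_j)/Σ_k C_{ik} g₁(x_k) + (1−γ)·d_j g₂(x_j)/Σ_k d_k g₂(x_k)`. -/
noncomputable def Md {n : ℕ} (C : Matrix (Fin n) (Fin n) ℝ) (d : Fin n → ℝ)
    (γ : ℝ) (g₁ g₂ : ℝ → ℝ) (x : Fin n → ℝ) : Matrix (Fin n) (Fin n) ℝ :=
  Matrix.of fun i j =>
    γ * (C i j * g₁ (x j) / ∑ k, C i k * g₁ (x k)) +
    (1 - γ) * (d j * g₂ (x j) / ∑ k, d k * g₂ (x k))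

/-!
Let `x`, `y` be positive points of the simplex with `e^{-W} y ≤ x ≤ e^V y`, where `V + W` is their
Hilbert distance. If all coordinates are at most `κ`, a weight `g` satisfies
`e^{-κLW} g(y) ≤ g(x) ≤ e^{κLV} g(y)`, so the two damped matrices are comparable. The stationary
vectors are compared by cuts: the stationary flow out of a set of states equals the flow into it,
so if `a m ≤ m' ≤ b m` then, once the ratios of the two stationary vectors are sorted, consecutive
ratios differ by a factor of at most `b / a`, and all of them by at most `(b / a)^(n-1)`. Clearing
the denominators `∑ₖ Cᵢₖ g₁(xₖ)` costs one more factor for `g₁`, which yields the exponents `n` and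
`n - 1` and makes `u` a `κ`-contraction in the Hilbert metric. Since `u` maps the simplex into a
region where all coordinates are at least some `ε > 0`, one may take `κ = 1 - ε`.
-/

open scoped Finset

section Comparison

variable {ι K : Type*} [Fintype ι] [DecidableEq ι] [Field K] [LinearOrder K]
  [IsStrictOrderedRing K]

lemma card_le_card_filter_le_pow_mul {f : ι → K} {c : K} (hc : 1 ≤ c)
    (hcut : ∀ S : Finset ι, S.Nonempty → Sᶜ.Nonempty → ∃ k ∈ S, ∃ l ∈ Sᶜ, f k ≤ c * f l)
    {j : ι} (hj : 0 ≤ f j) (t : ℕ) :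
    min (t + 1) (Fintype.card ι) ≤ #{k | f k ≤ c ^ t * f j} := by
  induction t with
  | zero =>
    exact (min_le_left _ _).trans (Finset.card_pos.mpr ⟨j, by simp⟩)
  | succ t ih =>
    set A : Finset ι := {k | f k ≤ c ^ t * f j} with hA
    set B : Finset ι := {k | f k ≤ c ^ (t + 1) * f j} with hB
    have hstep : c ^ t * f j ≤ c ^ (t + 1) * f j := by gcongr; exact t.le_succ
    have hAB : A ⊆ B := fun k hk => by
      simp only [hA, hB, Finset.mem_filter_univ] at hk ⊢
      exact hk.trans hstep
    have hjA : j ∈ A := by simpa [hA] using le_mul_of_one_le_left hj (one_le_pow₀ hc)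
    rcases Finset.eq_empty_or_nonempty Aᶜ with hA' | hA'
    · have hBuniv : B = Finset.univ :=
        Finset.univ_subset_iff.mp ((Finset.compl_eq_empty_iff A).mp hA' ▸ hAB)
      simp [hBuniv]
    · obtain ⟨k, hk, l, hl, hkl⟩ := hcut Aᶜ hA' ⟨j, by simpa using hjA⟩
      have hlA : f l ≤ c ^ t * f j := by simpa [hA] using hl
      have hkB : k ∈ B := by
        simp only [hB, Finset.mem_filter_univ, pow_succ', mul_assoc]
        exact hkl.trans (by gcongr)
      have hlt : #A < #B :=
        Finset.card_lt_card (hAB.ssubset_of_mem_notMem hkB (Finset.mem_compl.mp hk))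
      omega

lemma le_pow_mul_of_forall_cut {f : ι → K} {c : K} (hc : 1 ≤ c)
    (hcut : ∀ S : Finset ι, S.Nonempty → Sᶜ.Nonempty → ∃ k ∈ S, ∃ l ∈ Sᶜ, f k ≤ c * f l)
    (i : ι) {j : ι} (hj : 0 ≤ f j) : f i ≤ c ^ (Fintype.card ι - 1) * f j := by
  have hcard := card_le_card_filter_le_pow_mul hc hcut hj (Fintype.card ι - 1)
  rw [Nat.sub_add_cancel (Fintype.card_pos_iff.mpr ⟨i⟩), min_self] at hcard
  have huniv := Finset.eq_univ_of_card _ (hcard.antisymm (Finset.card_le_univ _)).symm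
  simpa using Finset.ext_iff.mp huniv i

/-- `w` is a stationary vector of the continuous-time Markov chain which jumps from `k` to `l` at
rate `m k l`; diagonal rates cancel. -/
def IsStationaryMass (m : Matrix ι ι K) (w : ι → K) : Prop :=
  ∀ l, ∑ k, w k * m k l = w l * ∑ k, m l k

/-- The flow from `S` to its complement when the mass `w` is transported at the jump rates `m`. -/
def cutFlow (m : Matrix ι ι K) (w : ι → K) (S : Finset ι) : K :=
  ∑ k ∈ S, ∑ l ∈ Sᶜ, w k * m k l

omit [LinearOrder K] [IsStrictOrderedRing K] in
lemma IsStationaryMass.cutFlow_compl {m : Matrix ι ι K} {w : ι → K} (h : IsStationaryMass m w)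
    (S : Finset ι) : cutFlow m w Sᶜ = cutFlow m w S := by
  have hbal : ∑ l ∈ S, ∑ k, w k * m k l = ∑ l ∈ S, ∑ k, w l * m l k :=
    Finset.sum_congr rfl fun l _ => by rw [h l, Finset.mul_sum]
  simp only [← Finset.sum_add_sum_compl S, Finset.sum_add_distrib] at hbal
  rw [Finset.sum_comm (s := S) (t := S)] at hbal
  rw [cutFlow, cutFlow, compl_compl, Finset.sum_comm]
  exact add_left_cancel hbal

lemma cutFlow_le_mul_cutFlow {m m' : Matrix ι ι K} {w w' : ι → K} {S : Finset ι} {b σ : K}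
    (hm' : ∀ k l, 0 ≤ m' k l) (hw' : ∀ k, 0 ≤ w' k)
    (hmm' : ∀ k l, m' k l ≤ b * m k l) (hww' : ∀ k ∈ S, w' k ≤ σ * w k) :
    cutFlow m' w' S ≤ σ * b * cutFlow m w S := by
  simp only [cutFlow, Finset.mul_sum]
  refine Finset.sum_le_sum fun k hk => Finset.sum_le_sum fun l _ => ?_
  calc w' k * m' k l ≤ (σ * w k) * (b * m k l) :=
        mul_le_mul (hww' k hk) (hmm' k l) (hm' k l) ((hw' k).trans (hww' k hk))
    _ = σ * b * (w k * m k l) := by ring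

variable {m m' : Matrix ι ι K} {w w' : ι → K} {b c : K}

lemma IsStationaryMass.exists_cut_div_le (h : IsStationaryMass m w) (h' : IsStationaryMass m' w')
    (hm : ∀ k l, 0 < m k l) (hm' : ∀ k l, 0 ≤ m' k l) (hw : ∀ k, 0 < w k) (hw' : ∀ k, 0 < w' k)
    (hb : ∀ k l, m' k l ≤ b * m k l) (hc : ∀ k l, m k l ≤ c * m' k l)
    {S : Finset ι} (hS : S.Nonempty) (hS' : Sᶜ.Nonempty) :
    ∃ k ∈ S, ∃ l ∈ Sᶜ, w' k / w k ≤ b * c * (w' l / w l) := by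
  obtain ⟨k, hk, hmin⟩ := S.exists_min_image (fun k => w' k / w k) hS
  obtain ⟨l, hl, hmax⟩ := Sᶜ.exists_max_image (fun l => w' l / w l) hS'
  refine ⟨k, hk, l, hl, ?_⟩
  set ρ := w' k / w k
  set σ := w' l / w l
  have hρ : 0 < ρ := div_pos (hw' k) (hw k)
  have hout : cutFlow m w S ≤ ρ⁻¹ * c * cutFlow m' w' S :=
    cutFlow_le_mul_cutFlow (fun k l => (hm k l).le) (fun k => (hw k).le) hc fun k hk => by
      rw [inv_mul_eq_div, le_div_iff₀ hρ, mul_comm]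
      exact (le_div_iff₀ (hw k)).mp (hmin k hk)
  have hin : cutFlow m' w' Sᶜ ≤ σ * b * cutFlow m w Sᶜ :=
    cutFlow_le_mul_cutFlow hm' (fun k => (hw' k).le) hb fun l hl =>
      (div_le_iff₀ (hw l)).mp (hmax l hl)
  rw [h.cutFlow_compl, h'.cutFlow_compl] at hin
  have hflow : 0 < cutFlow m w S := Finset.sum_pos
    (fun k _ => Finset.sum_pos (fun l _ => mul_pos (hw k) (hm k l)) hS') hS
  have hc0 : 0 < c := pos_of_mul_pos_left ((hm k l).trans_le (hc k l)) (hm' k l)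
  refine le_of_mul_le_mul_right ?_ hflow
  calc ρ * cutFlow m w S ≤ ρ * (ρ⁻¹ * c * cutFlow m' w' S) := by gcongr
    _ = c * cutFlow m' w' S := by field_simp
    _ ≤ c * (σ * b * cutFlow m w S) := by gcongr
    _ = b * c * σ * cutFlow m w S := by ring

omit [DecidableEq ι] in
theorem IsStationaryMass.mul_le_pow_mul (h : IsStationaryMass m w) (h' : IsStationaryMass m' w')
    (hm : ∀ k l, 0 < m k l) (hm' : ∀ k l, 0 ≤ m' k l) (hw : ∀ k, 0 < w k) (hw' : ∀ k, 0 < w' k)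
    (hb : ∀ k l, m' k l ≤ b * m k l) (hc : ∀ k l, m k l ≤ c * m' k l) (i j : ι) :
    w' i * w j ≤ (b * c) ^ (Fintype.card ι - 1) * (w i * w' j) := by
  classical
  have hc0 : 0 < c := pos_of_mul_pos_left ((hm i j).trans_le (hc i j)) (hm' i j)
  have hbc : 1 ≤ b * c := by
    refine le_of_mul_le_mul_right ?_ (hm i j)
    calc 1 * m i j ≤ c * m' i j := by rw [one_mul]; exact hc i j
      _ ≤ c * (b * m i j) := by gcongr; exact hb i j
      _ = b * c * m i j := by ring
  have hratio := le_pow_mul_of_forall_cut hbc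
    (fun _ => h.exists_cut_div_le h' hm hm' hw hw' hb hc) i (div_nonneg (hw' j).le (hw j).le)
  rw [← mul_div_assoc, div_le_div_iff₀ (hw i) (hw j)] at hratio
  linarith

end Comparison

section DampedMatrix

variable {ι : Type*} [Fintype ι]

lemma sum_le_mul_sum {R : Type*} [NonUnitalNonAssocSemiring R] [PartialOrder R]
    [IsOrderedAddMonoid R] {f f' : ι → R} {c : R} (h : ∀ k, f k ≤ c * f' k) :
    ∑ k, f k ≤ c * ∑ k, f' k := by
  rw [Finset.mul_sum]
  exact Finset.sum_le_sum fun k _ => h k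

/-- The damped Google matrix: with probability `γ` follow a link of the weighted graph `A`, with
probability `1 - γ` jump to a state chosen proportionally to `b`. -/
noncomputable def dampedMatrix (γ : ℝ) (A : Matrix ι ι ℝ) (b : ι → ℝ) : Matrix ι ι ℝ :=
  Matrix.of fun i j => γ * (A i j / ∑ k, A i k) + (1 - γ) * (b j / ∑ k, b k)

/-- Jump rates obtained from `dampedMatrix γ A b` by multiplying row `i` with the denominators
`∑ k, A i k` and `∑ k, b k`, which makes the entries monotone in `A` and `b`. -/
def dampedRates (γ : ℝ) (A : Matrix ι ι ℝ) (b : ι → ℝ) : Matrix ι ι ℝ :=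
  Matrix.of fun i j => γ * (A i j * ∑ k, b k) + (1 - γ) * (b j * ∑ k, A i k)

/-- Link weights `A` and teleportation weights `b` for which the denominators in
`dampedMatrix γ A b` do not vanish and teleportation reaches every state. -/
structure IsDampingData (A : Matrix ι ι ℝ) (b : ι → ℝ) : Prop where
  nonneg : ∀ i j, 0 ≤ A i j
  rowSum_pos : ∀ i, 0 < ∑ j, A i j
  pos : ∀ j, 0 < b j

variable {γ : ℝ} {A A' : Matrix ι ι ℝ} {b b' : ι → ℝ}

lemma IsDampingData.sum_pos [Nonempty ι] (h : IsDampingData A b) : 0 < ∑ j, b j :=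
  Finset.sum_pos (fun j _ => h.pos j) Finset.univ_nonempty

lemma IsDampingData.dampedRates_pos [Nonempty ι] (h : IsDampingData A b) (hγ0 : 0 ≤ γ)
    (hγ1 : γ < 1) (i j : ι) : 0 < dampedRates γ A b i j :=
  add_pos_of_nonneg_of_pos (mul_nonneg hγ0 (mul_nonneg (h.nonneg i j) h.sum_pos.le))
    (mul_pos (sub_pos.mpr hγ1) (mul_pos (h.pos j) (h.rowSum_pos i)))

lemma IsDampingData.dampedRates_le_mul (h : IsDampingData A b) (hγ0 : 0 ≤ γ) (hγ1 : γ ≤ 1)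
    {c₁ c₂ : ℝ} (hA : ∀ i j, A i j ≤ c₁ * A' i j) (hb : ∀ j, b j ≤ c₂ * b' j) (i j : ι) :
    dampedRates γ A b i j ≤ c₁ * c₂ * dampedRates γ A' b' i j := by
  have hlink : A i j * ∑ k, b k ≤ (c₁ * A' i j) * (c₂ * ∑ k, b' k) :=
    mul_le_mul (hA i j) (sum_le_mul_sum hb) (Finset.sum_nonneg fun k _ => (h.pos k).le)
      ((h.nonneg i j).trans (hA i j))
  have hjump : b j * ∑ k, A i k ≤ (c₂ * b' j) * (c₁ * ∑ k, A' i k) :=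
    mul_le_mul (hb j) (sum_le_mul_sum (hA i)) (h.rowSum_pos i).le ((h.pos j).le.trans (hb j))
  calc γ * (A i j * ∑ k, b k) + (1 - γ) * (b j * ∑ k, A i k)
      ≤ γ * ((c₁ * A' i j) * (c₂ * ∑ k, b' k))
        + (1 - γ) * ((c₂ * b' j) * (c₁ * ∑ k, A' i k)) :=
        add_le_add (mul_le_mul_of_nonneg_left hlink hγ0)
          (mul_le_mul_of_nonneg_left hjump (sub_nonneg.mpr hγ1))
    _ = c₁ * c₂ * dampedRates γ A' b' i j := by simp only [dampedRates, Matrix.of_apply]; ring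

lemma IsDampingData.isStationaryMass_dampedRates [Nonempty ι] (h : IsDampingData A b) {p : ι → ℝ}
    (hp : p ᵥ* dampedMatrix γ A b = p) :
    IsStationaryMass (dampedRates γ A b) fun i => p i / ∑ k, A i k := by
  intro l
  have hrates : ∀ k, p k / (∑ j, A k j) * dampedRates γ A b k l
      = (∑ j, b j) * (p k * dampedMatrix γ A b k l) := fun k => by
    have hk := (h.rowSum_pos k).ne'
    have hb := h.sum_pos.ne'
    simp only [dampedRates, dampedMatrix, Matrix.of_apply]
    field_simp
  have hexit : ∑ k, dampedRates γ A b l k = (∑ j, A l j) * ∑ j, b j := by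
    simp only [dampedRates, Matrix.of_apply, Finset.sum_add_distrib, ← Finset.mul_sum,
      ← Finset.sum_mul]
    ring
  have hpl : ∑ k, p k * dampedMatrix γ A b k l = p l := congrFun hp l
  simp only [hrates, ← Finset.mul_sum, hpl, hexit]
  field [(h.rowSum_pos l).ne']

lemma IsDampingData.le_dampedMatrix (h : IsDampingData A b) (hγ0 : 0 ≤ γ) (i j : ι) :
    (1 - γ) * (b j / ∑ k, b k) ≤ dampedMatrix γ A b i j :=
  le_add_of_nonneg_left (mul_nonneg hγ0 (div_nonneg (h.nonneg i j) (h.rowSum_pos i).le))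

theorem IsDampingData.mul_le_pow_mul_pow_mul (h : IsDampingData A b) (h' : IsDampingData A' b')
    (hγ0 : 0 ≤ γ) (hγ1 : γ < 1) {c₁ c₁' c₂ c₂' : ℝ}
    (hA : ∀ i j, A' i j ≤ c₁ * A i j) (hA' : ∀ i j, A i j ≤ c₁' * A' i j)
    (hb : ∀ j, b' j ≤ c₂ * b j) (hb' : ∀ j, b j ≤ c₂' * b' j)
    {p p' : ι → ℝ} (hp : ∀ i, 0 < p i) (hp' : ∀ i, 0 < p' i)
    (hinv : p ᵥ* dampedMatrix γ A b = p) (hinv' : p' ᵥ* dampedMatrix γ A' b' = p') (i j : ι) :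
    p' i * p j ≤
      (c₁ * c₁') ^ Fintype.card ι * (c₂ * c₂') ^ (Fintype.card ι - 1) * (p i * p' j) := by
  have : Nonempty ι := ⟨i⟩
  set N := Fintype.card ι
  set s : ι → ℝ := fun i => ∑ k, A i k
  set s' : ι → ℝ := fun i => ∑ k, A' i k
  have hs : ∀ i, 0 < s i := h.rowSum_pos
  have hs' : ∀ i, 0 < s' i := h'.rowSum_pos
  have hsi : s' i ≤ c₁ * s i := sum_le_mul_sum (hA i)
  have hsj : s j ≤ c₁' * s' j := sum_le_mul_sum (hA' j)
  have hcmp := (h.isStationaryMass_dampedRates hinv).mul_le_pow_mul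
    (h'.isStationaryMass_dampedRates hinv')
    (h.dampedRates_pos hγ0 hγ1) (fun k l => (h'.dampedRates_pos hγ0 hγ1 k l).le)
    (fun k => div_pos (hp k) (hs k)) (fun k => div_pos (hp' k) (hs' k))
    (h'.dampedRates_le_mul hγ0 hγ1.le hA hb) (h.dampedRates_le_mul hγ0 hγ1.le hA' hb') i j
  set D := (c₁ * c₂ * (c₁' * c₂')) ^ (N - 1) with hD
  have hD0 : 0 ≤ D * (p i / s i * (p' j / s' j)) :=
    (mul_pos (div_pos (hp' i) (hs' i)) (div_pos (hp j) (hs j))).le.trans hcmp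
  calc p' i * p j = p' i / s' i * (p j / s j) * (s' i * s j) := by
        field [(hs j).ne', (hs' i).ne']
    _ ≤ D * (p i / s i * (p' j / s' j)) * (c₁ * s i * (c₁' * s' j)) :=
        mul_le_mul hcmp (mul_le_mul hsi hsj (hs j).le ((hs' i).le.trans hsi))
          (mul_pos (hs' i) (hs j)).le hD0
    _ = D * (c₁ * c₁') * (p i * p' j) := by field [(hs i).ne', (hs' j).ne']
    _ = (c₁ * c₁') ^ N * (c₂ * c₂') ^ (N - 1) * (p i * p' j) := by
        rw [← mul_pow_sub_one (Fintype.card_ne_zero : N ≠ 0) (c₁ * c₁'), hD]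
        ring

end DampedMatrix

section HilbertMetric

variable {ι : Type*} {x y : ι → ℝ}

/-- The Funk metric `log maxᵢ (xᵢ / yᵢ)` between positive vectors: `exp (funkDist x y)` is the least
factor `c` with `x ≤ c • y`. -/
noncomputable def funkDist (x y : ι → ℝ) : ℝ := ⨆ i, Real.log (x i / y i)

/-- The Hilbert projective metric between positive vectors. -/
noncomputable def hilbertDist (x y : ι → ℝ) : ℝ := funkDist x y + funkDist y x

lemma le_exp_funkDist_mul [Finite ι] (hx : ∀ i, 0 < x i) (hy : ∀ i, 0 < y i) (i : ι) :
    x i ≤ Real.exp (funkDist x y) * y i := by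
  rw [← div_le_iff₀ (hy i), ← Real.log_le_iff_le_exp (div_pos (hx i) (hy i))]
  exact le_ciSup (f := fun i => Real.log (x i / y i)) (Set.finite_range _).bddAbove i

lemma hilbertDist_le_of_forall_mul_le [Finite ι] [Nonempty ι] (hx : ∀ i, 0 < x i)
    (hy : ∀ i, 0 < y i) {δ : ℝ} (h : ∀ i j, x i * y j ≤ Real.exp δ * (y i * x j)) :
    hilbertDist x y ≤ δ := by
  obtain ⟨i, hi⟩ := exists_eq_ciSup_of_finite (f := fun i => Real.log (x i / y i))
  obtain ⟨j, hj⟩ := exists_eq_ciSup_of_finite (f := fun i => Real.log (y i / x i))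
  have hi0 := div_pos (hx i) (hy i)
  have hj0 := div_pos (hy j) (hx j)
  rw [hilbertDist, funkDist, funkDist, ← hi, ← hj, ← Real.log_mul hi0.ne' hj0.ne',
    Real.log_le_iff_le_exp (mul_pos hi0 hj0), div_mul_div_comm,
    div_le_iff₀ (mul_pos (hy i) (hx j))]
  exact h i j

lemma funkDist_le_div [Fintype ι] [Nonempty ι] {ε : ℝ} (hε : 0 < ε)
    (hx : ∀ i, 0 < x i) (hy : ∀ i, ε ≤ y i) : funkDist x y ≤ dist x y / ε := by
  refine ciSup_le fun i => ?_
  have hyi : 0 < y i := hε.trans_le (hy i)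
  calc Real.log (x i / y i) ≤ x i / y i - 1 := Real.log_le_sub_one_of_pos (div_pos (hx i) hyi)
    _ = (x i - y i) / y i := by field
    _ ≤ dist x y / y i := by
        gcongr
        exact (le_abs_self _).trans (dist_le_pi_dist x y i)
    _ ≤ dist x y / ε := div_le_div_of_nonneg_left dist_nonneg hε (hy i)

lemma sub_le_mul_of_le_exp_mul {s t κ V : ℝ} (hs : 0 ≤ s) (hsκ : s ≤ κ) (hV : 0 ≤ V)
    (h : s ≤ Real.exp V * t) : s - t ≤ κ * V := by
  have hst : Real.exp (-V) * s ≤ t := by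
    rwa [Real.exp_neg, inv_mul_le_iff₀ (Real.exp_pos V)]
  have htangent : (1 - V) * s ≤ Real.exp (-V) * s :=
    mul_le_mul_of_nonneg_right (Real.one_sub_le_exp_neg V) hs
  linarith [mul_le_mul_of_nonneg_right hsκ hV]

lemma hilbertDist_iterate_le {u : (ι → ℝ) → ι → ℝ} {s : Set (ι → ℝ)} (hu : MapsTo u s s) {κ : ℝ}
    (hκ : 0 ≤ κ) (h : ∀ x ∈ s, ∀ y ∈ s, hilbertDist (u x) (u y) ≤ κ * hilbertDist x y)
    (hx : x ∈ s) (hy : y ∈ s) (t : ℕ) :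
    hilbertDist (u^[t] x) (u^[t] y) ≤ κ ^ t * hilbertDist x y := by
  induction t with
  | zero => simp
  | succ t ih =>
    rw [Function.iterate_succ_apply', Function.iterate_succ_apply', pow_succ', mul_assoc]
    exact (h _ (hu.iterate t hx) _ (hu.iterate t hy)).trans (mul_le_mul_of_nonneg_left ih hκ)

variable [Fintype ι]

lemma funkDist_nonneg (hx : x ∈ stdSimplex ℝ ι) (hy : y ∈ stdSimplex ℝ ι)
    (hx0 : ∀ i, 0 < x i) (hy0 : ∀ i, 0 < y i) : 0 ≤ funkDist x y := by
  have hsum := sum_le_mul_sum (le_exp_funkDist_mul hx0 hy0)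
  rw [hx.2, hy.2, mul_one] at hsum
  exact Real.one_le_exp_iff.mp hsum

lemma dist_le_hilbertDist (hx : x ∈ stdSimplex ℝ ι) (hy : y ∈ stdSimplex ℝ ι)
    (hx0 : ∀ i, 0 < x i) (hy0 : ∀ i, 0 < y i) : dist x y ≤ hilbertDist x y := by
  have hV := funkDist_nonneg hx hy hx0 hy0
  have hW := funkDist_nonneg hy hx hy0 hx0
  refine (dist_pi_le_iff (add_nonneg hV hW)).mpr fun i => abs_sub_le_iff.mpr ⟨?_, ?_⟩
  · have := sub_le_mul_of_le_exp_mul (hx0 i).le (mem_Icc_of_mem_stdSimplex hx i).2 hV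
      (le_exp_funkDist_mul hx0 hy0 i)
    linarith
  · have := sub_le_mul_of_le_exp_mul (hy0 i).le (mem_Icc_of_mem_stdSimplex hy i).2 hW
      (le_exp_funkDist_mul hy0 hx0 i)
    linarith

end HilbertMetric

section FixedPoint

theorem exists_fixedPoint_of_dist_iterate_le {α : Type*} [MetricSpace α] {s : Set α}
    (hs : IsComplete s) (hne : s.Nonempty) {f : α → α} (hf : MapsTo f s s) {B κ : ℝ}
    (hκ0 : 0 ≤ κ) (hκ1 : κ < 1)
    (h : ∀ t, ∀ x ∈ s, ∀ y ∈ s, dist (f^[t] x) (f^[t] y) ≤ B * κ ^ t * dist x y) :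
    ∃ z ∈ s, f z = z ∧ ∀ x ∈ s, Tendsto (fun t => f^[t] x) atTop (𝓝 z) := by
  have hlim : ∀ a : ℝ, Tendsto (fun t : ℕ => B * κ ^ t * a) atTop (𝓝 0) := fun a => by
    simpa using ((tendsto_pow_atTop_nhds_zero_of_lt_one hκ0 hκ1).const_mul B).mul_const a
  obtain ⟨x₀, hx₀⟩ := hne
  have hcauchy : CauchySeq fun t => f^[t] x₀ :=
    cauchySeq_of_le_geometric κ (B * dist x₀ (f x₀)) hκ1 fun t => by
      rw [Function.iterate_succ_apply]
      linarith [h t x₀ hx₀ (f x₀) (hf hx₀)]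
  obtain ⟨z, hz, hx₀z⟩ := cauchySeq_tendsto_of_isComplete hs (fun t => hf.iterate t hx₀) hcauchy
  have hx₀z' : Tendsto (fun t => f^[t + 1] x₀) atTop (𝓝 z) :=
    hx₀z.comp (tendsto_add_atTop_nat 1)
  have hfz : Tendsto (fun t => f^[t + 1] x₀) atTop (𝓝 (f z)) := by
    have hbound : Tendsto (fun t => B * κ ^ 1 * dist (f^[t] x₀) z) atTop (𝓝 0) := by
      simpa only [mul_zero] using (tendsto_iff_dist_tendsto_zero.mp hx₀z).const_mul (B * κ ^ 1)
    refine tendsto_iff_dist_tendsto_zero.mpr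
      (squeeze_zero (fun _ => dist_nonneg) (fun t => ?_) hbound)
    rw [Function.iterate_succ_apply']
    exact h 1 _ (hf.iterate t hx₀) z hz
  have hfix : f z = z := tendsto_nhds_unique hfz hx₀z'
  refine ⟨z, hz, hfix, fun x hx => tendsto_iff_dist_tendsto_zero.mpr
    (squeeze_zero (fun _ => dist_nonneg) (fun t => ?_) (hlim (dist x z)))⟩
  simpa only [Function.iterate_fixed hfix] using h t x hx z hz

/-- The points of the standard simplex all of whose coordinates are at least `ε`. -/
def truncatedSimplex (ι : Type*) [Fintype ι] (ε : ℝ) : Set (ι → ℝ) :=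
  {x ∈ stdSimplex ℝ ι | ∀ i, ε ≤ x i}

variable {ι : Type*} [Fintype ι] {ε : ℝ}

lemma isClosed_truncatedSimplex : IsClosed (truncatedSimplex ι ε) := by
  have hle : IsClosed {x : ι → ℝ | ∀ i, ε ≤ x i} := by
    simp only [Set.ofPred_forall]
    exact isClosed_iInter fun i => isClosed_le continuous_const (continuous_apply i)
  exact (isClosed_stdSimplex ℝ ι).inter hle

lemma le_one_of_mem_truncatedSimplex [Nonempty ι] {x : ι → ℝ} (hx : x ∈ truncatedSimplex ι ε) :
    ε ≤ 1 :=
  let i := Classical.arbitrary ι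
  (hx.2 i).trans (mem_Icc_of_mem_stdSimplex hx.1 i).2

lemma le_one_sub_of_mem_truncatedSimplex {x : ι → ℝ} (hx : x ∈ truncatedSimplex ι ε) {i j : ι}
    (hij : i ≠ j) : x i ≤ 1 - ε := by
  classical
  have hpair : x i + x j ≤ ∑ k, x k := by
    rw [← Finset.sum_pair hij]
    exact Finset.sum_le_univ_sum_of_nonneg hx.1.1
  rw [hx.1.2] at hpair
  linarith [hx.2 j]

theorem exists_fixedPoint_of_hilbertDist_le [Nonempty ι] {u : (ι → ℝ) → ι → ℝ} {κ : ℝ}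
    (hε : 0 < ε) (hκ0 : 0 ≤ κ) (hκ1 : κ < 1)
    (hu : MapsTo u (stdSimplex ℝ ι) (truncatedSimplex ι ε))
    (h : ∀ x ∈ truncatedSimplex ι ε, ∀ y ∈ truncatedSimplex ι ε,
      hilbertDist (u x) (u y) ≤ κ * hilbertDist x y) :
    ∃ z ∈ truncatedSimplex ι ε, u z = z ∧
      ∀ x ∈ stdSimplex ℝ ι, Tendsto (fun t => u^[t] x) atTop (𝓝 z) := by
  classical
  have huK : MapsTo u (truncatedSimplex ι ε) (truncatedSimplex ι ε) := fun x hx => hu hx.1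
  have hpos : ∀ x ∈ truncatedSimplex ι ε, ∀ i, 0 < x i := fun x hx i => hε.trans_le (hx.2 i)
  have hdist : ∀ t, ∀ x ∈ truncatedSimplex ι ε, ∀ y ∈ truncatedSimplex ι ε,
      dist (u^[t] x) (u^[t] y) ≤ 2 / ε * κ ^ t * dist x y := fun t x hx y hy => by
    have hxt := huK.iterate t hx
    have hyt := huK.iterate t hy
    have hxy : hilbertDist x y ≤ dist x y / ε + dist y x / ε :=
      add_le_add (funkDist_le_div hε (hpos x hx) hy.2) (funkDist_le_div hε (hpos y hy) hx.2)
    calc dist (u^[t] x) (u^[t] y) ≤ hilbertDist (u^[t] x) (u^[t] y) :=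
          dist_le_hilbertDist hxt.1 hyt.1 (hpos _ hxt) (hpos _ hyt)
      _ ≤ κ ^ t * hilbertDist x y := hilbertDist_iterate_le huK hκ0 h hx hy t
      _ ≤ κ ^ t * (dist x y / ε + dist y x / ε) := by gcongr
      _ = 2 / ε * κ ^ t * dist x y := by rw [dist_comm y x]; ring
  have hne : (truncatedSimplex ι ε).Nonempty :=
    ⟨_, hu (single_mem_stdSimplex ℝ (Classical.arbitrary ι))⟩
  obtain ⟨z, hz, hfix, hconv⟩ := exists_fixedPoint_of_dist_iterate_le
    isClosed_truncatedSimplex.isComplete hne huK hκ0 hκ1 hdist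
  exact ⟨z, hz, hfix, fun x hx => (tendsto_add_atTop_iff_nat 1).mp (hconv (u x) (hu hx))⟩

end FixedPoint

section DampedModel

/-- A positive nondecreasing weight on `[0, 1]` whose logarithm is `L`-Lipschitz. -/
structure IsLogLipschitzWeight (g : ℝ → ℝ) (L : ℝ) : Prop where
  pos : ∀ s ∈ Icc (0 : ℝ) 1, 0 < g s
  monotoneOn : MonotoneOn g (Icc 0 1)
  le_exp_mul : ∀ s ∈ Icc (0 : ℝ) 1, ∀ t ∈ Icc (0 : ℝ) 1, t ≤ s →
    g s ≤ Real.exp (L * (s - t)) * g t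

lemma IsWeight.deriv_nonneg {g g' : ℝ → ℝ} (hg : IsWeight g g') {s : ℝ}
    (hs : s ∈ Icc (0 : ℝ) 1) : 0 ≤ g' s := by
  obtain ⟨-, -, -, -, hpos | ⟨-, hzero⟩⟩ := hg
  · exact (hpos s hs).le
  · exact (hzero s hs).ge

lemma IsWeight.isLogLipschitzWeight {g g' : ℝ → ℝ} {L : ℝ} (hg : IsWeight g g')
    (hL : L ∈ upperBounds (ratioSet g g')) : IsLogLipschitzWeight g L where
  pos := hg.2.2.2.1
  monotoneOn := monotoneOn_of_hasDerivWithinAt_nonneg (convex_Icc 0 1)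
    (fun s hs => (hg.1 s hs).continuousWithinAt)
    (fun s hs => (hg.1 s (interior_subset hs)).mono interior_subset)
    fun s hs => hg.deriv_nonneg (interior_subset hs)
  le_exp_mul s hs t ht hts := by
    obtain ⟨hderiv, -, -, hpos, -⟩ := hg
    have hderiv' : ∀ r ∈ Icc (0 : ℝ) 1, HasDerivWithinAt (fun r => L * r - Real.log (g r))
        (L - g' r / g r) (Icc 0 1) r := fun r hr => by
      have hlin := (hasDerivWithinAt_id r (Icc (0 : ℝ) 1)).const_mul L
      rw [mul_one] at hlin
      exact hlin.sub ((hderiv r hr).log (hpos r hr).ne')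
    have hmono : MonotoneOn (fun r => L * r - Real.log (g r)) (Icc 0 1) :=
      monotoneOn_of_hasDerivWithinAt_nonneg (convex_Icc 0 1)
        (fun r hr => (hderiv' r hr).continuousWithinAt)
        (fun r hr => (hderiv' r (interior_subset hr)).mono interior_subset)
        fun r hr => sub_nonneg.mpr (hL ⟨r, interior_subset hr, rfl⟩)
    have hlog := hmono ht hs hts
    calc g s = Real.exp (Real.log (g s)) := (Real.exp_log (hpos s hs)).symm
      _ ≤ Real.exp (L * (s - t) + Real.log (g t)) := Real.exp_le_exp.mpr (by linarith)
      _ = Real.exp (L * (s - t)) * g t := by rw [Real.exp_add, Real.exp_log (hpos t ht)]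

namespace IsLogLipschitzWeight

variable {g : ℝ → ℝ} {L : ℝ}

lemma nonneg (hg : IsLogLipschitzWeight g L) : 0 ≤ L := by
  have h0 : (0 : ℝ) ∈ Icc (0 : ℝ) 1 := by simp
  have h1 : (1 : ℝ) ∈ Icc (0 : ℝ) 1 := by simp
  have hexp : 1 * g 0 ≤ Real.exp (L * (1 - 0)) * g 0 :=
    (one_mul (g 0)).trans_le
      ((hg.monotoneOn h0 h1 zero_le_one).trans (hg.le_exp_mul 1 h1 0 h0 zero_le_one))
  simpa using le_of_mul_le_mul_right hexp (hg.pos 0 h0)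

lemma le_exp_mul_of_le_exp_mul (hg : IsLogLipschitzWeight g L) {s t κ V : ℝ}
    (hs : s ∈ Icc (0 : ℝ) 1) (ht : t ∈ Icc (0 : ℝ) 1) (hsκ : s ≤ κ) (hV : 0 ≤ V)
    (hst : s ≤ Real.exp V * t) : g s ≤ Real.exp (L * (κ * V)) * g t := by
  have hgt := (hg.pos t ht).le
  rcases le_total t s with hts | hts
  · refine (hg.le_exp_mul s hs t ht hts).trans ?_
    gcongr
    exacts [hg.nonneg, sub_le_mul_of_le_exp_mul hs.1 hsκ hV hst]
  · refine (hg.monotoneOn hs ht hts).trans (le_mul_of_one_le_left hgt (Real.one_le_exp ?_))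
    exact mul_nonneg hg.nonneg (mul_nonneg (hs.1.trans hsκ) hV)

end IsLogLipschitzWeight

variable {ι : Type*} [Fintype ι]

/-- The transition matrix of the damped model over an arbitrary finite index type. -/
noncomputable def dampedChain (C : Matrix ι ι ℝ) (d : ι → ℝ) (γ : ℝ) (g₁ g₂ : ℝ → ℝ)
    (x : ι → ℝ) : Matrix ι ι ℝ :=
  dampedMatrix γ (Matrix.of fun i j => C i j * g₁ (x j)) fun j => d j * g₂ (x j)

variable {C : Matrix ι ι ℝ} {d : ι → ℝ} {γ : ℝ} {g₁ g₂ : ℝ → ℝ} {L₁ L₂ : ℝ}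

lemma isDampingData_of_mem_stdSimplex (hC : ∀ i j, 0 ≤ C i j) (hrow : ∀ i, ∃ j, 0 < C i j)
    (hd : ∀ i, 0 < d i) (hg₁ : IsLogLipschitzWeight g₁ L₁) (hg₂ : IsLogLipschitzWeight g₂ L₂)
    {x : ι → ℝ} (hx : x ∈ stdSimplex ℝ ι) :
    IsDampingData (Matrix.of fun i j => C i j * g₁ (x j)) fun j => d j * g₂ (x j) := by
  have hg₁x : ∀ j, 0 < g₁ (x j) := fun j => hg₁.pos _ (mem_Icc_of_mem_stdSimplex hx j)
  have hnonneg : ∀ i j, 0 ≤ C i j * g₁ (x j) := fun i j => mul_nonneg (hC i j) (hg₁x j).le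
  refine ⟨hnonneg, fun i => ?_, fun j =>
    mul_pos (hd j) (hg₂.pos _ (mem_Icc_of_mem_stdSimplex hx j))⟩
  obtain ⟨j, hj⟩ := hrow i
  exact Finset.sum_pos' (fun j _ => hnonneg i j) ⟨j, Finset.mem_univ j, mul_pos hj (hg₁x j)⟩

lemma le_of_vecMul_eq {M : Matrix ι ι ℝ} {p : ι → ℝ} (hp : p ∈ stdSimplex ℝ ι)
    (hM : p ᵥ* M = p) {j : ι} {ε : ℝ} (h : ∀ i, ε ≤ M i j) : ε ≤ p j :=
  calc ε = ∑ i, p i * ε := by rw [← Finset.sum_mul, hp.2, one_mul]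
    _ ≤ ∑ i, p i * M i j := Finset.sum_le_sum fun i _ => mul_le_mul_of_nonneg_left (h i) (hp.1 i)
    _ = p j := congrFun hM j

lemma exists_pos_mem_truncatedSimplex_of_invariant [Nonempty ι] (hC : ∀ i j, 0 ≤ C i j)
    (hrow : ∀ i, ∃ j, 0 < C i j) (hd : ∀ i, 0 < d i) (hγ0 : 0 ≤ γ) (hγ1 : γ < 1)
    (hg₁ : IsLogLipschitzWeight g₁ L₁) (hg₂ : IsLogLipschitzWeight g₂ L₂) :
    ∃ ε > 0, ∀ x ∈ stdSimplex ℝ ι, ∀ p ∈ stdSimplex ℝ ι,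
      p ᵥ* dampedChain C d γ g₁ g₂ x = p → p ∈ truncatedSimplex ι ε := by
  have h0 : (0 : ℝ) ∈ Icc (0 : ℝ) 1 := by simp
  have h1 : (1 : ℝ) ∈ Icc (0 : ℝ) 1 := by simp
  obtain ⟨j₀, hj₀⟩ := Finite.exists_min d
  have hmin : 0 < d j₀ * g₂ 0 := mul_pos (hd j₀) (hg₂.pos 0 h0)
  have hmax : 0 < ∑ k, d k * g₂ 1 :=
    Finset.sum_pos (fun k _ => mul_pos (hd k) (hg₂.pos 1 h1)) Finset.univ_nonempty
  refine ⟨(1 - γ) * (d j₀ * g₂ 0 / ∑ k, d k * g₂ 1),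
    mul_pos (sub_pos.mpr hγ1) (div_pos hmin hmax), fun x hx p hp hinv => ⟨hp, fun j => ?_⟩⟩
  have hxI := mem_Icc_of_mem_stdSimplex hx
  have hdata := isDampingData_of_mem_stdSimplex hC hrow hd hg₁ hg₂ hx
  have hnum : d j₀ * g₂ 0 ≤ d j * g₂ (x j) :=
    mul_le_mul (hj₀ j) (hg₂.monotoneOn h0 (hxI j) (hxI j).1) (hg₂.pos 0 h0).le (hd j).le
  have hden : ∑ k, d k * g₂ (x k) ≤ ∑ k, d k * g₂ 1 := Finset.sum_le_sum fun k _ =>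
    mul_le_mul_of_nonneg_left (hg₂.monotoneOn (hxI k) h1 (hxI k).2) (hd k).le
  refine le_of_vecMul_eq hp hinv fun i => le_trans ?_ (hdata.le_dampedMatrix hγ0 i j)
  exact mul_le_mul_of_nonneg_left
    (div_le_div₀ (hdata.pos j).le hnum hdata.sum_pos hden) (sub_pos.mpr hγ1).le

lemma exp_mul_exp_pow_mul_le {N : ℕ} (hN : 0 < N) (hsmall : N * L₁ + (N - 1) * L₂ ≤ 1)
    {V W : ℝ} (h : 0 ≤ V + W) :
    (Real.exp (L₁ * V) * Real.exp (L₁ * W)) ^ N *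
      (Real.exp (L₂ * V) * Real.exp (L₂ * W)) ^ (N - 1) ≤ Real.exp (V + W) := by
  rw [← Real.exp_add, ← Real.exp_add, ← Real.exp_nat_mul, ← Real.exp_nat_mul, ← Real.exp_add,
    Real.exp_le_exp, Nat.cast_pred hN]
  linarith [mul_le_mul_of_nonneg_right hsmall h]

lemma IsLogLipschitzWeight.mul_le_exp_funkDist_mul [Nontrivial ι] {g : ℝ → ℝ} {L ε a : ℝ}
    (hg : IsLogLipschitzWeight g L) (ha : 0 ≤ a) (hε : 0 < ε) {x y : ι → ℝ}
    (hx : x ∈ truncatedSimplex ι ε) (hy : y ∈ truncatedSimplex ι ε) (k : ι) :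
    a * g (x k) ≤ Real.exp (L * ((1 - ε) * funkDist x y)) * (a * g (y k)) := by
  have hx0 : ∀ i, 0 < x i := fun i => hε.trans_le (hx.2 i)
  have hy0 : ∀ i, 0 < y i := fun i => hε.trans_le (hy.2 i)
  obtain ⟨l, hl⟩ := exists_ne k
  rw [mul_left_comm]
  exact mul_le_mul_of_nonneg_left (hg.le_exp_mul_of_le_exp_mul (mem_Icc_of_mem_stdSimplex hx.1 k)
    (mem_Icc_of_mem_stdSimplex hy.1 k) (le_one_sub_of_mem_truncatedSimplex hx hl.symm)
    (funkDist_nonneg hx.1 hy.1 hx0 hy0) (le_exp_funkDist_mul hx0 hy0 k)) ha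

theorem hilbertDist_invariant_le [Nonempty ι] (hC : ∀ i j, 0 ≤ C i j)
    (hrow : ∀ i, ∃ j, 0 < C i j) (hd : ∀ i, 0 < d i) (hγ0 : 0 ≤ γ) (hγ1 : γ < 1)
    (hg₁ : IsLogLipschitzWeight g₁ L₁) (hg₂ : IsLogLipschitzWeight g₂ L₂)
    (hsmall : Fintype.card ι * L₁ + (Fintype.card ι - 1) * L₂ ≤ 1)
    {ε : ℝ} (hε : 0 < ε) {x y p q : ι → ℝ}
    (hx : x ∈ truncatedSimplex ι ε) (hy : y ∈ truncatedSimplex ι ε)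
    (hp : p ∈ truncatedSimplex ι ε) (hq : q ∈ truncatedSimplex ι ε)
    (hpx : p ᵥ* dampedChain C d γ g₁ g₂ x = p) (hqy : q ᵥ* dampedChain C d γ g₁ g₂ y = q) :
    hilbertDist p q ≤ (1 - ε) * hilbertDist x y := by
  have hpos : ∀ z ∈ truncatedSimplex ι ε, ∀ i, 0 < z i := fun z hz i => hε.trans_le (hz.2 i)
  have hdata := fun {z} (hz : z ∈ truncatedSimplex ι ε) =>
    isDampingData_of_mem_stdSimplex hC hrow hd hg₁ hg₂ hz.1
  have hκ : 0 ≤ 1 - ε := sub_nonneg.mpr (le_one_of_mem_truncatedSimplex hx)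
  have hδ : 0 ≤ (1 - ε) * funkDist x y + (1 - ε) * funkDist y x := add_nonneg
    (mul_nonneg hκ (funkDist_nonneg hx.1 hy.1 (hpos x hx) (hpos y hy)))
    (mul_nonneg hκ (funkDist_nonneg hy.1 hx.1 (hpos y hy) (hpos x hx)))
  rw [hilbertDist.eq_def x y, mul_add]
  refine hilbertDist_le_of_forall_mul_le (hpos p hp) (hpos q hq) fun i j => ?_
  have hqp : 0 ≤ q i * p j := (mul_pos (hpos q hq i) (hpos p hp j)).le
  rcases eq_or_ne i j with rfl | hij
  · rw [mul_comm (p i)]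
    exact le_mul_of_one_le_left hqp (Real.one_le_exp hδ)
  · have : Nontrivial ι := ⟨i, j, hij⟩
    exact ((hdata hy).mul_le_pow_mul_pow_mul (hdata hx) hγ0 hγ1
      (fun k l => hg₁.mul_le_exp_funkDist_mul (hC k l) hε hx hy l)
      (fun k l => hg₁.mul_le_exp_funkDist_mul (hC k l) hε hy hx l)
      (fun k => hg₂.mul_le_exp_funkDist_mul (hd k).le hε hx hy k)
      (fun k => hg₂.mul_le_exp_funkDist_mul (hd k).le hε hy hx k)
      (hpos q hq) (hpos p hp) hqy hpx i j).trans
      (mul_le_mul_of_nonneg_right (exp_mul_exp_pow_mul_le Fintype.card_pos hsmall hδ) hqp)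

theorem damped_u_unique_fixed_point_and_convergence_general [Nonempty ι]
    (hC : ∀ i j, 0 ≤ C i j) (hrow : ∀ i, ∃ j, 0 < C i j) (hd : ∀ i, 0 < d i)
    (hγ0 : 0 ≤ γ) (hγ1 : γ < 1)
    (hg₁ : IsLogLipschitzWeight g₁ L₁) (hg₂ : IsLogLipschitzWeight g₂ L₂)
    (hsmall : Fintype.card ι * L₁ + (Fintype.card ι - 1) * L₂ ≤ 1) {u : (ι → ℝ) → ι → ℝ}
    (hu : ∀ x ∈ stdSimplex ℝ ι,
      u x ∈ stdSimplex ℝ ι ∧ u x ᵥ* dampedChain C d γ g₁ g₂ x = u x) :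
    ∃ xs ∈ stdSimplex ℝ ι, (∀ i, 0 < xs i) ∧ u xs = xs ∧
      (∀ y ∈ stdSimplex ℝ ι, u y = y → y = xs) ∧
      ∀ x ∈ stdSimplex ℝ ι, Tendsto (fun s : ℕ => u^[s] x) atTop (𝓝 xs) := by
  classical
  obtain ⟨ε, hε, htrunc⟩ :=
    exists_pos_mem_truncatedSimplex_of_invariant hC hrow hd hγ0 hγ1 hg₁ hg₂
  have hmaps : MapsTo u (stdSimplex ℝ ι) (truncatedSimplex ι ε) := fun x hx =>
    htrunc x hx (u x) (hu x hx).1 (hu x hx).2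
  have hκ : 0 ≤ 1 - ε := sub_nonneg.mpr
    (le_one_of_mem_truncatedSimplex (hmaps (single_mem_stdSimplex ℝ (Classical.arbitrary ι))))
  obtain ⟨xs, hxs, hfix, hconv⟩ := exists_fixedPoint_of_hilbertDist_le hε hκ
    (sub_lt_self 1 hε) hmaps fun x hx y hy =>
      hilbertDist_invariant_le hC hrow hd hγ0 hγ1 hg₁ hg₂ hsmall hε hx hy
        (hmaps hx.1) (hmaps hy.1) (hu x hx.1).2 (hu y hy.1).2
  refine ⟨xs, hxs.1, fun i => hε.trans_le (hxs.2 i), hfix, fun y hy hfixy => ?_, hconv⟩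
  have hconst := hconv y hy
  simp only [Function.iterate_fixed hfixy] at hconst
  exact tendsto_nhds_unique tendsto_const_nhds hconst

end DampedModel

theorem damped_u_unique_fixed_point_and_convergence
    (n : ℕ) (hn : 0 < n) (C : Matrix (Fin n) (Fin n) ℝ)
    (hC0 : ∀ i j, 0 ≤ C i j) (hrow : ∀ i, ∃ j, 0 < C i j)
    (d : Fin n → ℝ) (hd : ∀ i, 0 < d i)
    (γ : ℝ) (hγ0 : 0 < γ) (hγ1 : γ < 1)
    (g₁ g₁' g₂ g₂' : ℝ → ℝ) (hg₁ : IsWeight g₁ g₁') (hg₂ : IsWeight g₂ g₂')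
    (Lp₁ Lp₂ : ℝ) (hLp₁ : IsGreatest (ratioSet g₁ g₁') Lp₁)
    (hLp₂ : IsGreatest (ratioSet g₂ g₂') Lp₂)
    (hsmall : (n : ℝ) * Lp₁ + ((n : ℝ) - 1) * Lp₂ ≤ 1)
    (u : (Fin n → ℝ) → (Fin n → ℝ))
    (hu : ∀ x ∈ stdSimplex ℝ (Fin n), u x ∈ stdSimplex ℝ (Fin n) ∧
      Matrix.vecMul (u x) (Md C d γ g₁ g₂ x) = u x ∧
      ∀ v ∈ stdSimplex ℝ (Fin n), Matrix.vecMul v (Md C d γ g₁ g₂ x) = v → v = u x) :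
    ∃ xs ∈ stdSimplex ℝ (Fin n), (∀ i, 0 < xs i) ∧ u xs = xs ∧
      (∀ y ∈ stdSimplex ℝ (Fin n), u y = y → y = xs) ∧
      ∀ x ∈ stdSimplex ℝ (Fin n),
        Tendsto (fun s : ℕ => u^[s] x) atTop (𝓝 xs) := by
  have : Nonempty (Fin n) := ⟨⟨0, hn⟩⟩
  exact damped_u_unique_fixed_point_and_convergence_general hC0 hrow hd hγ0.le hγ1
    (hg₁.isLogLipschitzWeight hLp₁.2) (hg₂.isLogLipschitzWeight hLp₂.2)
    (by rwa [Fintype.card_fin]) fun x hx => ⟨(hu x hx).1, (hu x hx).2.1⟩
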